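/- Let Q be the optimal Q-function for reward r, and let Q̄ : S × A → ℝ be an ε-optimal estimate, i.e. |Q(s,a) − Q̄(s,a)| ≤ ε for all (s,a), where ε ≥ 0. Let f : ℝ → ℝ be L-Lipschitz (|f(x)−f(y)| ≤ L·|x−y| for all x,y, with L ≥ 0) and satisfy: (1) f is convex; (2i) f(x+y) ≤ f(x) + f(y) for all x, y; (2ii) f(γx) ≤ γ·f(x) for all x. Define V̄_f(s) = max_{a∈A} f(Q̄(s,a)) and let C̄ be the optimal Q-function for reward r̄_C(s,a) = f(r(s,a)) + γ·∑_{s'} p(s'|s,a)·V̄_f(s') − f(Q̄(s,a)). If Q̃ is the optimal Q-function for the transformed reward (s,a) ↦ f(r(s,a)), then for all (s,a): f(Q̄(s,a)) − L·ε ≤ Q̃(s,a) ≤ f(Q̄(s,a)) + C̄(s,a) + (2/(1−γ))·L·ε. -/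

import Mathlib

/-!
The Bellman optimality operator `u ↦ R + γ P (max u)` obeys a comparison principle
(`bellman_comparison`): a subsolution lies below any supersolution. It is applied twice, with the
reward `R = f ∘ r`, whose exact solution is `Qt`.

* By subadditivity, subhomogeneity and Jensen's inequality, `f ∘ Q` is a subsolution, so
  `f (Q s a) ≤ Qt s a`; the Lipschitz bound replaces `Q` by `Qb` at the cost of `L * ε`.
* `f ∘ Qb + Cb` is a supersolution, because the reward defining `Cb` cancels `f ∘ Qb` and
  `max (x + y) ≤ max x + max y`. This already gives `Qt ≤ f ∘ Qb + Cb`; the remaining term of the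
  upper bound is nonnegative slack.
-/

open Finset

/-- Maximum of a real-valued function over a nonempty finite action set. -/
noncomputable def amax {A : Type*} [Fintype A] [Nonempty A] (g : A → ℝ) : ℝ :=
  Finset.univ.sup' Finset.univ_nonempty g

theorem le_amax {A : Type*} [Fintype A] [Nonempty A] (g : A → ℝ) (a : A) : g a ≤ amax g :=
  Finset.le_sup' g (Finset.mem_univ a)

theorem amax_le {A : Type*} [Fintype A] [Nonempty A] {g : A → ℝ} {c : ℝ}
    (h : ∀ a, g a ≤ c) : amax g ≤ c :=
  Finset.sup'_le _ _ fun a _ => h a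

theorem exists_eq_amax {A : Type*} [Fintype A] [Nonempty A] (g : A → ℝ) :
    ∃ a, amax g = g a := by
  obtain ⟨a, -, h⟩ := Finset.exists_mem_eq_sup' Finset.univ_nonempty g
  exact ⟨a, h⟩

/-- Comparison principle for the Bellman optimality operator. At a pair `(s, a)` maximizing
`u - v`, with maximum `M`, the hypotheses give `M ≤ γ * M`, hence `M ≤ 0`. -/
theorem bellman_comparison {S A : Type*} [Fintype S] [Fintype A] [Nonempty S] [Nonempty A]
    {p : S → A → S → ℝ} (hp_nonneg : ∀ s a s', 0 ≤ p s a s')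
    (hp_sum : ∀ s a, ∑ s', p s a s' = 1)
    {γ : ℝ} (hγ0 : 0 < γ) (hγ1 : γ < 1) {R u v : S → A → ℝ}
    (hu : ∀ s a, u s a ≤ R s a + γ * ∑ s', p s a s' * amax (fun a' => u s' a'))
    (hv : ∀ s a, R s a + γ * ∑ s', p s a s' * amax (fun a' => v s' a') ≤ v s a) :
    ∀ s a, u s a ≤ v s a := by
  obtain ⟨⟨s₀, a₀⟩, hM⟩ := Finite.exists_max (fun x : S × A => u x.1 x.2 - v x.1 x.2)
  set M := u s₀ a₀ - v s₀ a₀ with hMdef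
  have hle : ∀ s a, u s a - v s a ≤ M := fun s a => hM (s, a)
  have hmax : ∀ s', amax (fun a' => u s' a') ≤ amax (fun a' => v s' a') + M := fun s' =>
    amax_le fun a' => by
      linarith [hle s' a', le_amax (fun a' => v s' a') a']
  have hsum : ∑ s', p s₀ a₀ s' * amax (fun a' => u s' a')
      ≤ ∑ s', p s₀ a₀ s' * amax (fun a' => v s' a') + M := by
    calc ∑ s', p s₀ a₀ s' * amax (fun a' => u s' a')
        ≤ ∑ s', p s₀ a₀ s' * (amax (fun a' => v s' a') + M) :=
          Finset.sum_le_sum fun s' _ => mul_le_mul_of_nonneg_left (hmax s') (hp_nonneg _ _ _)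
      _ = _ := by simp only [mul_add, Finset.sum_add_distrib, ← Finset.sum_mul, hp_sum, one_mul]
  have hcontr : M ≤ γ * M := by
    have := mul_le_mul_of_nonneg_left hsum hγ0.le
    linarith [hu s₀ a₀, hv s₀ a₀]
  have hM0 : M ≤ 0 := by nlinarith
  intro s a
  linarith [hle s a]

/-- **Convex conditions with error-prone Q-values, standard RL (Lemma 4.1A).** -/
theorem convex_conditions_error_prone_standard_rl
    {S A : Type*} [Fintype S] [Fintype A] [Nonempty S] [Nonempty A]
    (p : S → A → S → ℝ)
    (hp_nonneg : ∀ s a s', 0 ≤ p s a s')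
    (hp_sum : ∀ s a, ∑ s', p s a s' = 1)
    (γ : ℝ) (hγ0 : 0 < γ) (hγ1 : γ < 1)
    (r : S → A → ℝ)
    -- Q is the optimal Q-function for reward r
    (Q : S → A → ℝ)
    (hQ : ∀ s a, Q s a = r s a + γ * ∑ s', p s a s' * amax (fun a' => Q s' a'))
    -- Q̄ is an ε-optimal estimate of Q
    (ε : ℝ) (hε : 0 ≤ ε)
    (Qb : S → A → ℝ)
    (hQb : ∀ s a, |Q s a - Qb s a| ≤ ε)
    -- the transformation function f : L-Lipschitz, and the convex conditions
    (f : ℝ → ℝ)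
    (L : ℝ) (hL : 0 ≤ L)
    (hf_lip : ∀ x y, |f x - f y| ≤ L * |x - y|)
    (hf_convex : ConvexOn ℝ Set.univ f)
    (hf_subadd : ∀ x y, f (x + y) ≤ f x + f y)
    (hf_subhom : ∀ x, f (γ * x) ≤ γ * f x)
    -- V̄_f, the auxiliary reward r̄_C, and C̄ the optimal Q-function for r̄_C
    (Vfb : S → ℝ)
    (hVfb : ∀ s, Vfb s = amax (fun a => f (Qb s a)))
    (rCb : S → A → ℝ)
    (hrCb : ∀ s a, rCb s a = f (r s a) + γ * (∑ s', p s a s' * Vfb s') - f (Qb s a))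
    (Cb : S → A → ℝ)
    (hCb : ∀ s a, Cb s a = rCb s a + γ * ∑ s', p s a s' * amax (fun a' => Cb s' a'))
    -- Q̃ is the optimal Q-function for the transformed reward f ∘ r
    (Qt : S → A → ℝ)
    (hQt : ∀ s a, Qt s a = f (r s a) + γ * ∑ s', p s a s' * amax (fun a' => Qt s' a')) :
    ∀ s a, f (Qb s a) - L * ε ≤ Qt s a ∧
      Qt s a ≤ f (Qb s a) + Cb s a + (2 / (1 - γ)) * L * ε := by
  have hlow : ∀ s a, f (Q s a) ≤ Qt s a := by
    refine bellman_comparison hp_nonneg hp_sum hγ0 hγ1 (R := fun s a => f (r s a))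
      (u := fun s a => f (Q s a)) (fun s a => ?_) (fun s a => (hQt s a).ge)
    have hjensen : f (∑ s', p s a s' * amax (fun a' => Q s' a'))
        ≤ ∑ s', p s a s' * f (amax (fun a' => Q s' a')) := by
      simpa only [smul_eq_mul] using
        hf_convex.map_sum_le (t := Finset.univ) (w := p s a)
          (p := fun s' => amax (fun a' => Q s' a'))
          (fun s' _ => hp_nonneg s a s') (hp_sum s a) (fun _ _ => Set.mem_univ _)
    -- The maximum is attained, so `f (max Q) ≤ max (f ∘ Q)` without monotonicity of `f`.
    have hfmax : ∀ s', f (amax (fun a' => Q s' a')) ≤ amax (fun a' => f (Q s' a')) := by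
      intro s'
      obtain ⟨b, hb⟩ := exists_eq_amax (fun a' => Q s' a')
      rw [hb]
      exact le_amax (fun a' => f (Q s' a')) b
    calc f (Q s a) = f (r s a + γ * ∑ s', p s a s' * amax (fun a' => Q s' a')) := by
          rw [← hQ s a]
      _ ≤ f (r s a) + γ * f (∑ s', p s a s' * amax (fun a' => Q s' a')) :=
          (hf_subadd _ _).trans (by gcongr; exact hf_subhom _)
      _ ≤ f (r s a) + γ * ∑ s', p s a s' * amax (fun a' => f (Q s' a')) := by
          gcongr
          exact hjensen.trans (Finset.sum_le_sum fun s' _ =>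
            mul_le_mul_of_nonneg_left (hfmax s') (hp_nonneg s a s'))
  have hup : ∀ s a, Qt s a ≤ f (Qb s a) + Cb s a := by
    refine bellman_comparison hp_nonneg hp_sum hγ0 hγ1 (R := fun s a => f (r s a))
      (v := fun s a => f (Qb s a) + Cb s a) (fun s a => (hQt s a).le) (fun s a => ?_)
    have hsum : ∑ s', p s a s' * amax (fun a' => f (Qb s' a') + Cb s' a')
        ≤ ∑ s', p s a s' * Vfb s' + ∑ s', p s a s' * amax (fun a' => Cb s' a') := by
      rw [← Finset.sum_add_distrib]
      refine Finset.sum_le_sum fun s' _ => ?_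
      rw [← mul_add, hVfb s']
      exact mul_le_mul_of_nonneg_left (amax_le fun a' => add_le_add
        (le_amax (fun a' => f (Qb s' a')) a') (le_amax (fun a' => Cb s' a') a'))
        (hp_nonneg s a s')
    have := mul_le_mul_of_nonneg_left hsum hγ0.le
    linarith [hCb s a, hrCb s a]
  intro s a
  constructor
  · have hlip : f (Qb s a) - f (Q s a) ≤ L * ε := by
      refine (le_abs_self _).trans ((hf_lip _ _).trans ?_)
      rw [abs_sub_comm]
      exact mul_le_mul_of_nonneg_left (hQb s a) hL
    linarith [hlow s a]
  · have h1 : 0 < 1 - γ := by linarith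
    have : 0 ≤ (2 / (1 - γ)) * L * ε := by positivity
    linarith [hup s a]
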